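/- Let D be a dendriform algebra and V a vector space. An extending datum Ω(D,V) = (▷₁,▷₂,◁₁,◁₂,≻_V,≺_V) with trivial maps ⇀₁ = ⇀₂ = ↼₁ = ↼₂ = 0 and f₁ = f₂ = 0 is a dendriform extending structure of D through V (i.e., the unified product with these operations is a dendriform algebra) if and only if (D,V,▷₁,▷₂,◁₁,◁₂,≻_V,≺_V) is a nonabelian semidirect system, that is: (V,≻_V,≺_V) is a dendriform algebra, (V,▷₁,▷₂,◁₁,◁₂) is a D-bimodule, and for all a ∈ D, x,y ∈ V (with ⋆_V := ≻_V+≺_V, ▷ := ▷₁+▷₂, ◁ := ◁₁+◁₂): (S1) (x⋆_Vy)◁₁a = x≻_V(y◁₁a), (x≺_Vy)◁₂a = x≺_V(y◁a), (x≻_Vy)◁₂a = x≻_V(y◁₂a); (S2) (a▷x)≻_Vy = a▷₁(x≻_Vy), (a▷₂x)≺_Vy = a▷₂(x⋆_Vy), (a▷₁x)≺_Vy = a▷₁(x≺_Vy); (S3) (x◁a)≻_Vy = x≻_V(a▷₁y), (x◁₂a)≺_Vy = x≺_V(a▷y), (x◁₁a)≺_Vy = x≻_V(a▷₂y). -/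

import Mathlib

/-! A unified product with trivial `⇀ᵢ, ↼ᵢ, fᵢ` has the operations
`(a, x) ⪰ (b, y) = (a ≻ b, a ▷₁ y + x ◁₁ b + x ≻ y)`, and similarly for `⪯`.  Each dendriform axiom
is trilinear, so it holds on `D × V` if and only if it holds on triples of pure vectors, each taken
from `D` or from `V`.  The `D`-components, and the triple `DDD`, only involve `D` itself.  The
other seven words give, for each of the three axioms, exactly one condition: `DDV`, `VDD` and `DVD`
are the bimodule axioms, `VVV` says that `V` is dendriform, and `VVD`, `DVV`, `VDV` are
(S1), (S2), (S3). -/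

/- Common framework for dendriform algebras, extending structures and unified
products, over the field `ℂ`.  All operations are encoded as plain functions
together with bilinearity predicates. -/

namespace DendriformES

section Basic

variable {M N P : Type*} [AddCommGroup M] [Module ℂ M] [AddCommGroup N] [Module ℂ N]
  [AddCommGroup P] [Module ℂ P]

/-- A map `f : M → N → P` is (ℂ-)bilinear. -/
def IsBilinear (f : M → N → P) : Prop :=
  (∀ a b y, f (a + b) y = f a y + f b y) ∧
  (∀ (c : ℂ) (a : M) (y : N), f (c • a) y = c • f a y) ∧
  (∀ a x y, f a (x + y) = f a x + f a y) ∧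
  (∀ (c : ℂ) (a : M) (x : N), f a (c • x) = c • f a x)

end Basic

section Dend

variable {D V : Type*} [AddCommGroup D] [Module ℂ D] [AddCommGroup V] [Module ℂ V]

/-- The three dendriform axioms for a pair of binary operations `s = ≻`, `p = ≺`. -/
def DendAxioms (s p : D → D → D) : Prop :=
  (∀ x y z, s (s x y + p x y) z = s x (s y z)) ∧
  (∀ x y z, p (p x y) z = p x (s y z + p y z)) ∧
  (∀ x y z, p (s x y) z = s x (p y z))

/-- `(D, s, p)` is a dendriform algebra: both operations are bilinear and the
three dendriform axioms hold. -/
def IsDendriform (s p : D → D → D) : Prop :=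
  IsBilinear s ∧ IsBilinear p ∧ DendAxioms s p

/-- `(V, t1, t2)` is a left module over the dendriform algebra `(D, s, p)`. -/
def IsLeftDModule (s p : D → D → D) (t1 t2 : D → V → V) : Prop :=
  IsBilinear t1 ∧ IsBilinear t2 ∧
  (∀ a b x, t1 (s a b + p a b) x = t1 a (t1 b x)) ∧
  (∀ a b x, t2 (p a b) x = t2 a (t1 b x + t2 b x)) ∧
  (∀ a b x, t2 (s a b) x = t1 a (t2 b x))

/-- `(V, l1, l2)` is a right module over the dendriform algebra `(D, s, p)`. -/
def IsRightDModule (s p : D → D → D) (l1 l2 : V → D → V) : Prop :=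
  IsBilinear l1 ∧ IsBilinear l2 ∧
  (∀ a b x, l1 (l1 x a + l2 x a) b = l1 x (s a b)) ∧
  (∀ a b x, l2 (l2 x a) b = l2 x (s a b + p a b)) ∧
  (∀ a b x, l2 (l1 x a) b = l1 x (p a b))

/-- `(V, t1, t2, l1, l2)` is a bimodule over the dendriform algebra `(D, s, p)`. -/
def IsDBimodule (s p : D → D → D) (t1 t2 : D → V → V) (l1 l2 : V → D → V) : Prop :=
  IsLeftDModule s p t1 t2 ∧ IsRightDModule s p l1 l2 ∧
  (∀ a b x, l1 (t1 a x + t2 a x) b = t1 a (l1 x b)) ∧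
  (∀ a b x, l2 (t2 a x) b = t2 a (l1 x b + l2 x b)) ∧
  (∀ a b x, l2 (t1 a x) b = t1 a (l2 x b))

/-- A morphism of dendriform algebras: a linear map preserving both operations. -/
def IsDendMorphism (s p : D → D → D) (s' p' : V → V → V) (φ : D → V) : Prop :=
  IsLinearMap ℂ φ ∧ (∀ x y, φ (s x y) = s' (φ x) (φ y)) ∧
    (∀ x y, φ (p x y) = p' (φ x) (φ y))

end Dend

/-- An extending datum `Ω(D,V)` of `D` through `V`: twelve maps
`tr1, tr2 = ▷₁, ▷₂ : D×V→V`, `sl1, sl2 = ◁₁, ◁₂ : V×D→V`,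
`hr1, hr2 = ⇀₁, ⇀₂ : V×D→D`, `hl1, hl2 = ↼₁, ↼₂ : D×V→D`,
`cf1, cf2 = f₁, f₂ : V×V→D`, `sv, pv = ≻_V, ≺_V : V×V→V`. -/
structure ExtendingDatum (D V : Type*) [AddCommGroup D] [Module ℂ D]
    [AddCommGroup V] [Module ℂ V] where
  tr1 : D → V → V
  tr2 : D → V → V
  sl1 : V → D → V
  sl2 : V → D → V
  hr1 : V → D → D
  hr2 : V → D → D
  hl1 : D → V → D
  hl2 : D → V → D
  cf1 : V → V → D
  cf2 : V → V → D
  sv : V → V → V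
  pv : V → V → V

section Datum

variable {D V : Type*} [AddCommGroup D] [Module ℂ D] [AddCommGroup V] [Module ℂ V]

/-- All twelve maps of an extending datum are bilinear. -/
def ExtendingDatum.Bilinear (Ω : ExtendingDatum D V) : Prop :=
  IsBilinear Ω.tr1 ∧ IsBilinear Ω.tr2 ∧ IsBilinear Ω.sl1 ∧ IsBilinear Ω.sl2 ∧
  IsBilinear Ω.hr1 ∧ IsBilinear Ω.hr2 ∧ IsBilinear Ω.hl1 ∧ IsBilinear Ω.hl2 ∧
  IsBilinear Ω.cf1 ∧ IsBilinear Ω.cf2 ∧ IsBilinear Ω.sv ∧ IsBilinear Ω.pv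

/-- The operation `⪰` of the unified product `D ♮ V`. -/
def uSucc (s : D → D → D) (Ω : ExtendingDatum D V) : D × V → D × V → D × V :=
  fun u v =>
    (s u.1 v.1 + Ω.hl1 u.1 v.2 + Ω.hr1 u.2 v.1 + Ω.cf1 u.2 v.2,
     Ω.tr1 u.1 v.2 + Ω.sl1 u.2 v.1 + Ω.sv u.2 v.2)

/-- The operation `⪯` of the unified product `D ♮ V`. -/
def uPrec (p : D → D → D) (Ω : ExtendingDatum D V) : D × V → D × V → D × V :=
  fun u v =>
    (p u.1 v.1 + Ω.hl2 u.1 v.2 + Ω.hr2 u.2 v.1 + Ω.cf2 u.2 v.2,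
     Ω.tr2 u.1 v.2 + Ω.sl2 u.2 v.1 + Ω.pv u.2 v.2)

/-- An extending datum is a dendriform extending structure when the unified
product `D ♮ V` is a dendriform algebra. -/
def IsExtendingStructure (s p : D → D → D) (Ω : ExtendingDatum D V) : Prop :=
  Ω.Bilinear ∧ IsDendriform (uSucc s Ω) (uPrec p Ω)

/-- Conditions (E1)–(E5) on a pair of linear maps `g : V → D`, `h : V → V`
relating two extending datums `Ω`, `Ω'`. -/
def ECond (s p : D → D → D) (Ω Ω' : ExtendingDatum D V) (g : V → D) (h : V → V) : Prop :=
  -- (E1)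
  (∀ a x, h (Ω.tr1 a x) = Ω'.tr1 a (h x)) ∧
  (∀ a x, h (Ω.tr2 a x) = Ω'.tr2 a (h x)) ∧
  (∀ a x, h (Ω.sl1 x a) = Ω'.sl1 (h x) a) ∧
  (∀ a x, h (Ω.sl2 x a) = Ω'.sl2 (h x) a) ∧
  -- (E2)
  (∀ a x, Ω.hr1 x a + g (Ω.sl1 x a) = s (g x) a + Ω'.hr1 (h x) a) ∧
  (∀ a x, Ω.hr2 x a + g (Ω.sl2 x a) = p (g x) a + Ω'.hr2 (h x) a) ∧
  -- (E3)
  (∀ a x, Ω.hl1 a x + g (Ω.tr1 a x) = s a (g x) + Ω'.hl1 a (h x)) ∧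
  (∀ a x, Ω.hl2 a x + g (Ω.tr2 a x) = p a (g x) + Ω'.hl2 a (h x)) ∧
  -- (E4)
  (∀ x y, Ω.cf1 x y + g (Ω.sv x y) =
      s (g x) (g y) + Ω'.hl1 (g x) (h y) + Ω'.hr1 (h x) (g y) + Ω'.cf1 (h x) (h y)) ∧
  (∀ x y, Ω.cf2 x y + g (Ω.pv x y) =
      p (g x) (g y) + Ω'.hl2 (g x) (h y) + Ω'.hr2 (h x) (g y) + Ω'.cf2 (h x) (h y)) ∧
  -- (E5)
  (∀ x y, h (Ω.sv x y) = Ω'.tr1 (g x) (h y) + Ω'.sl1 (h x) (g y) + Ω'.sv (h x) (h y)) ∧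
  (∀ x y, h (Ω.pv x y) = Ω'.tr2 (g x) (h y) + Ω'.sl2 (h x) (g y) + Ω'.pv (h x) (h y))

/-- A deformation map of an extending structure `Ω(D,V)`. -/
def IsDeformationMap (s p : D → D → D) (Ω : ExtendingDatum D V) (d : V → D) : Prop :=
  IsLinearMap ℂ d ∧
  (∀ x y, s (d x) (d y) - d (Ω.sv x y) =
      d (Ω.tr1 (d x) y + Ω.sl1 x (d y)) - Ω.hl1 (d x) y - Ω.hr1 x (d y) - Ω.cf1 x y) ∧
  (∀ x y, p (d x) (d y) - d (Ω.pv x y) =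
      d (Ω.tr2 (d x) y + Ω.sl2 x (d y)) - Ω.hl2 (d x) y - Ω.hr2 x (d y) - Ω.cf2 x y)

/-- The operation `≻_d` of the deformation `V_d` of `V`. -/
def defSucc (Ω : ExtendingDatum D V) (d : V → D) : V → V → V :=
  fun x y => Ω.sv x y + Ω.tr1 (d x) y + Ω.sl1 x (d y)

/-- The operation `≺_d` of the deformation `V_d` of `V`. -/
def defPrec (Ω : ExtendingDatum D V) (d : V → D) : V → V → V :=
  fun x y => Ω.pv x y + Ω.tr2 (d x) y + Ω.sl2 x (d y)

end Datum

section Canonical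

variable {E : Type*} [AddCommGroup E] [Module ℂ E]

theorem sub_mem_ker (D : Submodule ℂ E) (ρ : E →ₗ[ℂ] E)
    (hρD : ∀ u, ρ u ∈ D) (hfix : ∀ a ∈ D, ρ a = a) (u : E) :
    u - ρ u ∈ LinearMap.ker ρ := by
  have h := hfix (ρ u) (hρD u)
  simp [LinearMap.mem_ker, map_sub, h]

/-- The canonical extending datum of `D` through `V = ker ρ` associated to a
dendriform algebra structure `(sE, pE)` on `E` and a linear retraction
`ρ : E → D`. -/
def canonicalDatum (sE pE : E → E → E) (D : Submodule ℂ E) (ρ : E →ₗ[ℂ] E)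
    (hρD : ∀ u, ρ u ∈ D) (hfix : ∀ a ∈ D, ρ a = a) :
    ExtendingDatum ↥D ↥(LinearMap.ker ρ) where
  tr1 := fun a x => ⟨sE a.1 x.1 - ρ (sE a.1 x.1), sub_mem_ker D ρ hρD hfix _⟩
  tr2 := fun a x => ⟨pE a.1 x.1 - ρ (pE a.1 x.1), sub_mem_ker D ρ hρD hfix _⟩
  sl1 := fun x a => ⟨sE x.1 a.1 - ρ (sE x.1 a.1), sub_mem_ker D ρ hρD hfix _⟩
  sl2 := fun x a => ⟨pE x.1 a.1 - ρ (pE x.1 a.1), sub_mem_ker D ρ hρD hfix _⟩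
  hr1 := fun x a => ⟨ρ (sE x.1 a.1), hρD _⟩
  hr2 := fun x a => ⟨ρ (pE x.1 a.1), hρD _⟩
  hl1 := fun a x => ⟨ρ (sE a.1 x.1), hρD _⟩
  hl2 := fun a x => ⟨ρ (pE a.1 x.1), hρD _⟩
  cf1 := fun x y => ⟨ρ (sE x.1 y.1), hρD _⟩
  cf2 := fun x y => ⟨ρ (pE x.1 y.1), hρD _⟩
  sv := fun x y => ⟨sE x.1 y.1 - ρ (sE x.1 y.1), sub_mem_ker D ρ hρD hfix _⟩
  pv := fun x y => ⟨pE x.1 y.1 - ρ (pE x.1 y.1), sub_mem_ker D ρ hρD hfix _⟩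

/-- The pair of operations on `E` associated to an extending datum of `D`
through `V = ker ρ` (the map `Υ₂`). -/
def datumToOps (D : Submodule ℂ E) (ρ : E →ₗ[ℂ] E)
    (hρD : ∀ u, ρ u ∈ D) (hfix : ∀ a ∈ D, ρ a = a) (sD pD : ↥D → ↥D → ↥D)
    (Ω : ExtendingDatum ↥D ↥(LinearMap.ker ρ)) : (E → E → E) × (E → E → E) :=
  let dp : E → ↥D := fun u => ⟨ρ u, hρD u⟩
  let vp : E → ↥(LinearMap.ker ρ) := fun u => ⟨u - ρ u, sub_mem_ker D ρ hρD hfix u⟩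
  (fun u v =>
     (sD (dp u) (dp v) : E) + (Ω.hl1 (dp u) (vp v) : E) + (Ω.hr1 (vp u) (dp v) : E)
       + (Ω.cf1 (vp u) (vp v) : E) + (Ω.tr1 (dp u) (vp v) : E) + (Ω.sl1 (vp u) (dp v) : E)
       + (Ω.sv (vp u) (vp v) : E),
   fun u v =>
     (pD (dp u) (dp v) : E) + (Ω.hl2 (dp u) (vp v) : E) + (Ω.hr2 (vp u) (dp v) : E)
       + (Ω.cf2 (vp u) (vp v) : E) + (Ω.tr2 (dp u) (vp v) : E) + (Ω.sl2 (vp u) (dp v) : E)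
       + (Ω.pv (vp u) (vp v) : E))

end Canonical

end DendriformES

namespace DendriformES

section Zero

variable {M N P : Type*} [AddCommGroup M] [Module ℂ M] [AddCommGroup N] [Module ℂ N]
  [AddCommGroup P] [Module ℂ P]

theorem IsBilinear.zero_left {f : M → N → P} (hf : IsBilinear f) (y : N) : f 0 y = 0 := by
  simpa using hf.2.1 0 0 y

theorem IsBilinear.zero_right {f : M → N → P} (hf : IsBilinear f) (x : M) : f x 0 = 0 := by
  simpa using hf.2.2.2 0 x 0

end Zero

/-- an extending datum with trivial maps
`⇀₁ = ⇀₂ = ↼₁ = ↼₂ = 0` and `f₁ = f₂ = 0` is a dendriform extending structure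
iff the data form a nonabelian semidirect system: `(V,≻_V,≺_V)` is a
dendriform algebra, `(V,▷₁,▷₂,◁₁,◁₂)` is a `D`-bimodule and (S1)–(S3) hold. -/
theorem nonabelianSemidirectSystem_iff {D V : Type*}
    [AddCommGroup D] [Module ℂ D] [AddCommGroup V] [Module ℂ V]
    (s p : D → D → D) (hD : IsDendriform s p)
    (Ω : ExtendingDatum D V) (hbil : Ω.Bilinear)
    (hhr1 : ∀ x a, Ω.hr1 x a = 0) (hhr2 : ∀ x a, Ω.hr2 x a = 0)
    (hhl1 : ∀ a x, Ω.hl1 a x = 0) (hhl2 : ∀ a x, Ω.hl2 a x = 0)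
    (hf1 : ∀ x y, Ω.cf1 x y = 0) (hf2 : ∀ x y, Ω.cf2 x y = 0) :
    IsExtendingStructure s p Ω ↔
      (IsDendriform Ω.sv Ω.pv ∧
      IsDBimodule s p Ω.tr1 Ω.tr2 Ω.sl1 Ω.sl2 ∧
      -- (S1)
      (∀ a x y, Ω.sl1 (Ω.sv x y + Ω.pv x y) a = Ω.sv x (Ω.sl1 y a)) ∧
      (∀ a x y, Ω.sl2 (Ω.pv x y) a = Ω.pv x (Ω.sl1 y a + Ω.sl2 y a)) ∧
      (∀ a x y, Ω.sl2 (Ω.sv x y) a = Ω.sv x (Ω.sl2 y a)) ∧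
      -- (S2)
      (∀ a x y, Ω.sv (Ω.tr1 a x + Ω.tr2 a x) y = Ω.tr1 a (Ω.sv x y)) ∧
      (∀ a x y, Ω.pv (Ω.tr2 a x) y = Ω.tr2 a (Ω.sv x y + Ω.pv x y)) ∧
      (∀ a x y, Ω.pv (Ω.tr1 a x) y = Ω.tr1 a (Ω.pv x y)) ∧
      -- (S3)
      (∀ a x y, Ω.sv (Ω.sl1 x a + Ω.sl2 x a) y = Ω.sv x (Ω.tr1 a y)) ∧
      (∀ a x y, Ω.pv (Ω.sl2 x a) y = Ω.pv x (Ω.tr1 a y + Ω.tr2 a y)) ∧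
      (∀ a x y, Ω.pv (Ω.sl1 x a) y = Ω.sv x (Ω.tr2 a y))) := by
  obtain ⟨hs, hp, hss, hpp, hsp⟩ := hD
  have hbil' := hbil
  obtain ⟨t1, t2, l1, l2, -, -, -, -, -, -, sv, pv⟩ := hbil'
  have hzl : ∀ u v, uSucc s Ω u v =
      (s u.1 v.1, Ω.tr1 u.1 v.2 + Ω.sl1 u.2 v.1 + Ω.sv u.2 v.2) := by
    intro u v
    simp [uSucc, hhr1, hhl1, hf1]
  have hzr : ∀ u v, uPrec p Ω u v =
      (p u.1 v.1, Ω.tr2 u.1 v.2 + Ω.sl2 u.2 v.1 + Ω.pv u.2 v.2) := by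
    intro u v
    simp [uPrec, hhr2, hhl2, hf2]
  constructor
  · rintro ⟨-, -, -, A1, A2, A3⟩
    -- An axiom of the unified product, evaluated at three pure vectors and projected to `V`,
    -- loses every term that contains a zero argument.
    simp only [hzl, hzr, Prod.forall, Prod.mk_add_mk, Prod.mk.injEq] at A1 A2 A3
    have V1 := fun x y z => (A1 0 x 0 y 0 z).2
    have V2 := fun x y z => (A2 0 x 0 y 0 z).2
    have V3 := fun x y z => (A3 0 x 0 y 0 z).2
    have L1 := fun a b x => (A1 a 0 b 0 0 x).2
    have L2 := fun a b x => (A2 a 0 b 0 0 x).2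
    have L3 := fun a b x => (A3 a 0 b 0 0 x).2
    have R1 := fun a b x => (A1 0 x a 0 b 0).2
    have R2 := fun a b x => (A2 0 x a 0 b 0).2
    have R3 := fun a b x => (A3 0 x a 0 b 0).2
    have M1 := fun a b x => (A1 a 0 0 x b 0).2
    have M2 := fun a b x => (A2 a 0 0 x b 0).2
    have M3 := fun a b x => (A3 a 0 0 x b 0).2
    have P1 := fun a x y => (A1 0 x 0 y a 0).2
    have P2 := fun a x y => (A2 0 x 0 y a 0).2
    have P3 := fun a x y => (A3 0 x 0 y a 0).2
    have Q1 := fun a x y => (A1 a 0 0 x 0 y).2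
    have Q2 := fun a x y => (A2 a 0 0 x 0 y).2
    have Q3 := fun a x y => (A3 a 0 0 x 0 y).2
    have T1 := fun a x y => (A1 0 x a 0 0 y).2
    have T2 := fun a x y => (A2 0 x a 0 0 y).2
    have T3 := fun a x y => (A3 0 x a 0 0 y).2
    simp only [hs.zero_left, hs.zero_right, hp.zero_left, hp.zero_right, t1.zero_left,
      t1.zero_right, t2.zero_left, t2.zero_right, l1.zero_left, l1.zero_right, l2.zero_left,
      l2.zero_right, sv.zero_left, sv.zero_right, pv.zero_left, pv.zero_right, add_zero, zero_add]
      at V1 V2 V3 L1 L2 L3 R1 R2 R3 M1 M2 M3 P1 P2 P3 Q1 Q2 Q3 T1 T2 T3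
    exact ⟨⟨sv, pv, V1, V2, V3⟩, ⟨⟨t1, t2, L1, L2, L3⟩, ⟨l1, l2, R1, R2, R3⟩, M1, M2, M3⟩,
      P1, P2, P3, Q1, Q2, Q3, T1, T2, T3⟩
  · rintro ⟨⟨-, -, B1, B2, B3⟩, ⟨⟨-, -, L1, L2, L3⟩, ⟨-, -, R1, R2, R3⟩, M1, M2, M3⟩,
      S11, S12, S13, S21, S22, S23, S31, S32, S33⟩
    -- Both the conditions and, below, the axioms are expanded by bilinearity, so that the
    -- `V`-component of each axiom is the sum of the seven conditions for its seven words.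
    simp only [t1.1, t2.1, l1.1, l2.1, sv.1, pv.1, t1.2.2.1, t2.2.2.1, l1.2.2.1, l2.2.2.1,
      sv.2.2.1, pv.2.2.1] at B1 B2 B3 L1 L2 L3 R1 R2 R3 M1 M2 M3 S11 S12 S13 S21 S22 S23 S31 S32 S33
    refine ⟨hbil, ?_, ?_, ?_, ?_, ?_⟩
    · refine ⟨?_, ?_, ?_, ?_⟩ <;> intros <;> simp only [hzl] <;> ext <;>
        simp [hs.1, hs.2.1, hs.2.2.1, hs.2.2.2, t1.1, t1.2.1, t1.2.2.1, t1.2.2.2,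
          l1.1, l1.2.1, l1.2.2.1, l1.2.2.2, sv.1, sv.2.1, sv.2.2.1, sv.2.2.2] <;> abel
    · refine ⟨?_, ?_, ?_, ?_⟩ <;> intros <;> simp only [hzr] <;> ext <;>
        simp [hp.1, hp.2.1, hp.2.2.1, hp.2.2.2, t2.1, t2.2.1, t2.2.2.1, t2.2.2.2,
          l2.1, l2.2.1, l2.2.2.1, l2.2.2.2, pv.1, pv.2.1, pv.2.2.1, pv.2.2.2] <;> abel
    · rintro ⟨a, x⟩ ⟨b, y⟩ ⟨c, z⟩
      simp only [hzl, hzr, Prod.mk_add_mk]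
      refine Prod.ext (hss a b c) ?_
      simp only [t1.1, t2.1, l1.1, l2.1, sv.1, pv.1, t1.2.2.1, t2.2.2.1, l1.2.2.1, l2.2.2.1,
        sv.2.2.1, pv.2.2.1]
      linear_combination (norm := abel) L1 a b z + R1 b c x + M1 a c y + S11 c x y + S21 a y z + S31 b x z + B1 x y z
    · rintro ⟨a, x⟩ ⟨b, y⟩ ⟨c, z⟩
      simp only [hzl, hzr, Prod.mk_add_mk]
      refine Prod.ext (hpp a b c) ?_
      simp only [t1.1, t2.1, l1.1, l2.1, sv.1, pv.1, t1.2.2.1, t2.2.2.1, l1.2.2.1, l2.2.2.1,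
        sv.2.2.1, pv.2.2.1]
      linear_combination (norm := abel) L2 a b z + R2 b c x + M2 a c y + S12 c x y + S22 a y z + S32 b x z + B2 x y z
    · rintro ⟨a, x⟩ ⟨b, y⟩ ⟨c, z⟩
      simp only [hzl, hzr, Prod.mk_add_mk]
      refine Prod.ext (hsp a b c) ?_
      simp only [t1.1, t2.1, l1.1, l2.1, sv.1, pv.1, t1.2.2.1, t2.2.2.1, l1.2.2.1, l2.2.2.1,
        sv.2.2.1, pv.2.2.1]
      linear_combination (norm := abel) L3 a b z + R3 b c x + M3 a c y + S13 c x y + S23 a y z + S33 b x z + B3 x y z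

end DendriformES
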